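/- Let u ∈ BV(X). There is a constant C ≥ 1 depending only on C_d and C_P such that for μ-a.e. x ∈ X the following hold: the limit D(x) := lim_{r→0} V(u,B(x,r))/μ(B(x,r)) exists and is finite; if D(x) > 0, then there exist R > 0 and a set A ⊆ X with x ∉ A and A of density 0 at x such that the restriction of u to B(x,R)∖A is Lipschitz with constant C·D(x); and if D(x) = 0, then for every δ > 0 there exist R > 0 and a set A ⊆ X with x ∉ A and A of density 0 at x such that the restriction of u to B(x,R)∖A is Lipschitz with constant δ. -/

import Mathlib

open MeasureTheory Metric Filter Set Topology
open scoped NNReal ENNReal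

noncomputable section

universe u

/-- The measure `μ` is doubling with constant `Cd`:
`0 < μ(B(x,2r)) ≤ Cd·μ(B(x,r)) < ∞` for every `x` and every `r > 0`. -/
def IsDoublingWith {X : Type u} [PseudoMetricSpace X] [MeasurableSpace X]
    (μ : Measure X) (Cd : ℝ≥0) : Prop :=
  ∀ (x : X) (r : ℝ), 0 < r →
    0 < μ (ball x (2 * r)) ∧
      μ (ball x (2 * r)) ≤ (Cd : ℝ≥0∞) * μ (ball x r) ∧
      (Cd : ℝ≥0∞) * μ (ball x r) < ⊤

/-- `X` is a geodesic space: any two points are joined by a unit-speed geodesic. -/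
def IsGeodesic (X : Type u) [PseudoMetricSpace X] : Prop :=
  ∀ x y : X, ∃ γ : ℝ → X,
    LipschitzOnWith 1 γ (Icc 0 (dist x y)) ∧ γ 0 = x ∧ γ (dist x y) = y

/-- `g` is an upper gradient of `u`: for every `L ≥ 0` and every `1`-Lipschitz curve
`γ : [0,L] → X`, `|u(γ 0) − u(γ L)| ≤ ∫₀^L g(γ t) dt`. -/
def IsUpperGradientOf {X : Type u} [PseudoMetricSpace X] (g u : X → ℝ) : Prop :=
  ∀ L : ℝ, 0 ≤ L → ∀ γ : ℝ → X, LipschitzOnWith 1 γ (Icc 0 L) →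
    |u (γ 0) - u (γ L)| ≤ ∫ t in (0:ℝ)..L, g (γ t)

/-- The lower pointwise Lipschitz constant
`lip u (x) = liminf_{r→0} r⁻¹ sup_{y ∈ B(x,r)} |u y − u x|`. -/
def lipConst {X : Type u} [PseudoMetricSpace X] (u : X → ℝ) (x : X) : ℝ≥0∞ :=
  Filter.liminf
    (fun r : ℝ => ⨆ y ∈ ball x r, ENNReal.ofReal (|u y - u x| / r)) (𝓝[>] (0:ℝ))

/-- `u` is locally Lipschitz on `W`: Lipschitz on every closed bounded subset of `W`. -/
def LocallyLipschitzOnSet {X : Type u} [PseudoMetricSpace X] (u : X → ℝ) (W : Set X) : Prop :=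
  ∀ K : Set X, IsClosed K → Bornology.IsBounded K → K ⊆ W →
    ∃ L : ℝ≥0, LipschitzOnWith L u K

/-- `u i → f` in `L¹_loc(W)`. -/
def TendstoL1loc {X : Type u} [PseudoMetricSpace X] [MeasurableSpace X]
    (μ : Measure X) (u : ℕ → X → ℝ) (f : X → ℝ) (W : Set X) : Prop :=
  ∀ K : Set X, IsClosed K → Bornology.IsBounded K → K ⊆ W →
    Tendsto (fun i => ∫⁻ x in K, ENNReal.ofReal |u i x - f x| ∂μ) atTop (𝓝 0)

/-- Total variation `V(f,W)` of `f` on an open set `W`: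
the infimum over sequences of locally Lipschitz functions converging to `f` in `L¹_loc(W)`
of the liminf of `∫_W lip u_i dμ`. -/
def totVarOn {X : Type u} [PseudoMetricSpace X] [MeasurableSpace X]
    (μ : Measure X) (f : X → ℝ) (W : Set X) : ℝ≥0∞ :=
  ⨅ (us : ℕ → X → ℝ) (_ : ∀ i, LocallyLipschitzOnSet (us i) W)
    (_ : TendstoL1loc μ us f W),
    Filter.liminf (fun i => ∫⁻ x in W, lipConst (us i) x ∂μ) atTop

/-- Total variation `V(f,A)` of `f` on an arbitrary set `A`:
infimum of `V(f,W)` over open `W ⊇ A`. -/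
def totVarSet {X : Type u} [PseudoMetricSpace X] [MeasurableSpace X]
    (μ : Measure X) (f : X → ℝ) (A : Set X) : ℝ≥0∞ :=
  ⨅ (W : Set X) (_ : IsOpen W) (_ : A ⊆ W), totVarOn μ f W

/-- `f` is of bounded variation: locally integrable and `V(f,X) < ∞`. -/
def IsBV {X : Type u} [MetricSpace X] [MeasurableSpace X]
    (μ : Measure X) (f : X → ℝ) : Prop :=
  LocallyIntegrable f μ ∧ totVarOn μ f Set.univ < ⊤

/-- `(X,d,μ)` supports a `1`-Poincaré inequality with constant `CP`. -/
def SupportsPoincare {X : Type u} [MetricSpace X] [MeasurableSpace X]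
    (μ : Measure X) (CP : ℝ) : Prop :=
  ∀ u : X → ℝ, LocallyLipschitzOnSet u Set.univ →
    ∀ g : X → ℝ, (∀ x, 0 ≤ g x) → Measurable g → IsUpperGradientOf g u →
      ∀ (x : X) (r : ℝ), 0 < r →
        (⨍ y in ball x r, |u y - (⨍ z in ball x r, u z ∂μ)| ∂μ) ≤
          CP * r * (⨍ y in ball x r, g y ∂μ)

/-- Standing assumptions: a complete geodesic metric measure space with at least two
points, whose measure is doubling and supports a 1-Poincaré inequality. -/
def GoodSpace (X : Type u) [MetricSpace X] [MeasurableSpace X]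
    (μ : Measure X) (Cd : ℝ≥0) (CP : ℝ) : Prop :=
  Nontrivial X ∧ CompleteSpace X ∧ IsGeodesic X ∧
    IsDoublingWith μ Cd ∧ SupportsPoincare μ CP

/-- The codimension-1 Hausdorff measure
`𝓗(A) = sup_{δ>0} inf { Σ μ(B_i)/r_i : 0 < r_i ≤ δ, A ⊆ ⋃ B_i }`,
the infimum over countable coverings of `A` by balls (balls of nonpositive radius
are empty and contribute `0`). -/
def codimOneH {X : Type u} [PseudoMetricSpace X] [MeasurableSpace X]
    (μ : Measure X) (A : Set X) : ℝ≥0∞ :=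
  ⨆ (δ : ℝ) (_ : 0 < δ),
    ⨅ (c : ℕ → X) (r : ℕ → ℝ) (_ : ∀ i, r i ≤ δ)
      (_ : A ⊆ ⋃ i, ball (c i) (r i)),
      ∑' i, if 0 < r i then μ (ball (c i) (r i)) / ENNReal.ofReal (r i) else 0

/-- The measure theoretic boundary `∂*E`. -/
def measBdry {X : Type u} [PseudoMetricSpace X] [MeasurableSpace X]
    (μ : Measure X) (E : Set X) : Set X :=
  {x : X |
    0 < Filter.limsup (fun r : ℝ => μ (E ∩ ball x r) / μ (ball x r)) (𝓝[>] (0:ℝ)) ∧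
    0 < Filter.limsup (fun r : ℝ => μ (Eᶜ ∩ ball x r) / μ (ball x r)) (𝓝[>] (0:ℝ))}

/-- `A` has density `0` at `x`. -/
def DensityZeroAt {X : Type u} [PseudoMetricSpace X] [MeasurableSpace X]
    (μ : Measure X) (A : Set X) (x : X) : Prop :=
  Tendsto (fun r : ℝ => μ (A ∩ ball x r) / μ (ball x r)) (𝓝[>] (0:ℝ)) (𝓝 0)

/-- `A` has density `1` at `x`. -/
def DensityOneAt {X : Type u} [PseudoMetricSpace X] [MeasurableSpace X]
    (μ : Measure X) (A : Set X) (x : X) : Prop :=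
  Tendsto (fun r : ℝ => μ (A ∩ ball x r) / μ (ball x r)) (𝓝[>] (0:ℝ)) (𝓝 1)

/-- `x` is a Lebesgue point of `u`. -/
def LebesguePointOf {X : Type u} [MetricSpace X] [MeasurableSpace X]
    (μ : Measure X) (u : X → ℝ) (x : X) : Prop :=
  Tendsto (fun r : ℝ => ⨍ y in ball x r, |u y - u x| ∂μ) (𝓝[>] (0:ℝ)) (𝓝 0)

/-- `u` is a Borel representative whose value at each Lebesgue point equals the limit
of its ball averages. -/
def PreciseRep {X : Type u} [MetricSpace X] [MeasurableSpace X]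
    (μ : Measure X) (u : X → ℝ) : Prop :=
  Measurable u ∧ ∀ (x : X) (c : ℝ),
    Tendsto (fun r : ℝ => ⨍ y in ball x r, u y ∂μ) (𝓝[>] (0:ℝ)) (𝓝 c) → u x = c

/-- The restricted maximal function `M_R ν (x) = sup_{0<r≤R} ν(B(x,r))/μ(B(x,r))`. -/
def restrMaximal {X : Type u} [PseudoMetricSpace X] [MeasurableSpace X]
    (μ ν : Measure X) (R : ℝ) (x : X) : ℝ≥0∞ :=
  ⨆ (r : ℝ) (_ : 0 < r) (_ : r ≤ R), ν (ball x r) / μ (ball x r)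

/-- `F_g(x,y)`: the infimum of `∫_γ g ds` over 1-Lipschitz curves `γ : [0,L] → Z`
joining `x` to `y` (the infimum over the empty set is `∞`). -/
def curveInf {Z : Type u} [PseudoMetricSpace Z] (g : Z → ℝ) (x y : Z) : ℝ≥0∞ :=
  ⨅ (L : ℝ) (_ : 0 ≤ L) (γ : ℝ → Z) (_ : LipschitzOnWith 1 γ (Icc 0 L))
    (_ : γ 0 = x) (_ : γ L = y),
    ∫⁻ t in Icc (0:ℝ) L, ENNReal.ofReal (g (γ t))

/-- Weak-star convergence of measures: test against continuous, compactly
supported functions. -/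
def WeakStar {Z : Type u} [MetricSpace Z] [MeasurableSpace Z]
    (ν : ℕ → Measure Z) (m : Measure Z) : Prop :=
  ∀ φ : Z → ℝ, Continuous φ → HasCompactSupport φ →
    Tendsto (fun n => ∫ x, φ x ∂(ν n)) atTop (𝓝 (∫ x, φ x ∂m))

/-- `φ ∈ BV_c(U)`: a BV function whose support is compact and contained in `U`. -/
def MemBVc {X : Type u} [MetricSpace X] [MeasurableSpace X]
    (μ : Measure X) (φ : X → ℝ) (U : Set X) : Prop :=
  IsBV μ φ ∧ IsCompact (tsupport φ) ∧ tsupport φ ⊆ U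

section Doubling

variable {X : Type u} [MetricSpace X] [MeasurableSpace X] {μ : Measure X} {Cd : ℝ≥0}

namespace IsDoublingWith

lemma measure_ball_pos (h : IsDoublingWith μ Cd) (x : X) {r : ℝ} (hr : 0 < r) :
    0 < μ (ball x r) := by
  simpa [mul_div_cancel₀] using (h x (r / 2) (by positivity)).1

lemma measure_ball_lt_top (h : IsDoublingWith μ Cd) (hCd : 1 ≤ Cd) (x : X) (r : ℝ) :
    μ (ball x r) < ⊤ := by
  rcases le_or_gt r 0 with hr | hr
  · simp [ball_eq_empty.2 hr]
  · refine lt_of_le_of_lt ?_ (h x r hr).2.2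
    exact le_mul_of_one_le_left' (by exact_mod_cast hCd)

lemma measure_closedBall_lt_top (h : IsDoublingWith μ Cd) (hCd : 1 ≤ Cd) (x : X) (r : ℝ) :
    μ (closedBall x r) < ⊤ :=
  (measure_mono (closedBall_subset_ball (lt_add_one r))).trans_lt (h.measure_ball_lt_top hCd x _)

lemma measure_ball_two_mul_le (h : IsDoublingWith μ Cd) (x : X) {r : ℝ} (hr : 0 < r) :
    μ (ball x (2 * r)) ≤ Cd * μ (ball x r) :=
  (h x r hr).2.1

lemma measure_ball_four_mul_le (h : IsDoublingWith μ Cd) (x : X) {r : ℝ} (hr : 0 < r) :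
    μ (ball x (4 * r)) ≤ (Cd ^ 2 : ℝ≥0) * μ (ball x r) := by
  calc μ (ball x (4 * r)) = μ (ball x (2 * (2 * r))) := by ring_nf
    _ ≤ Cd * μ (ball x (2 * r)) := h.measure_ball_two_mul_le x (by positivity)
    _ ≤ Cd * (Cd * μ (ball x r)) := by gcongr; exact h.measure_ball_two_mul_le x hr
    _ = (Cd ^ 2 : ℝ≥0) * μ (ball x r) := by push_cast; ring

lemma isUnifLocDoublingMeasure (h : IsDoublingWith μ Cd) : IsUnifLocDoublingMeasure μ := by
  refine ⟨⟨Cd ^ 2, ?_⟩⟩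
  filter_upwards [self_mem_nhdsWithin] with r (hr : 0 < r) x
  calc μ (closedBall x (2 * r)) ≤ μ (ball x (4 * r)) :=
        measure_mono (closedBall_subset_ball (by linarith))
    _ ≤ (Cd ^ 2 : ℝ≥0) * μ (ball x r) := h.measure_ball_four_mul_le x hr
    _ ≤ (Cd ^ 2 : ℝ≥0) * μ (closedBall x r) := by gcongr; exact ball_subset_closedBall

lemma isLocallyFiniteMeasure (h : IsDoublingWith μ Cd) (hCd : 1 ≤ Cd) :
    IsLocallyFiniteMeasure μ :=
  ⟨fun x => ⟨ball x 1, ball_mem_nhds x one_pos, h.measure_ball_lt_top hCd x 1⟩⟩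

lemma sigmaFinite (h : IsDoublingWith μ Cd) (hCd : 1 ≤ Cd) (x : X) : SigmaFinite μ :=
  ⟨⟨{ set := fun n => ball x n
      set_mem := fun _ => trivial
      finite := fun n => h.measure_ball_lt_top hCd x n
      spanning := iUnion_ball_nat x }⟩⟩

lemma secondCountableTopology [OpensMeasurableSpace X] (h : IsDoublingWith μ Cd) (hCd : 1 ≤ Cd) :
    SecondCountableTopology X := by
  refine Metric.secondCountable_of_almost_dense_set fun ε hε => ?_
  rcases isEmpty_or_nonempty X with hX | ⟨⟨x₀⟩⟩
  · exact ⟨∅, countable_empty, fun x => hX.elim x⟩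
  have := h.sigmaFinite hCd x₀
  obtain ⟨s, -, hdisj, hcov⟩ := Vitali.exists_disjoint_subfamily_covering_enlargement_closedBall
    (univ : Set X) id (fun _ => ε / 4) (ε / 4) (fun _ _ => le_rfl) 4 (by norm_num)
  refine ⟨s, ?_, fun x => ?_⟩
  · have := Measure.countable_meas_pos_of_disjoint_iUnion₀ (μ := μ)
      (As := fun i : s => closedBall (i : X) (ε / 4))
      (fun _ => isClosed_closedBall.measurableSet.nullMeasurableSet)
      (fun i j hij => (hdisj i.2 j.2 (Subtype.coe_ne_coe.2 hij)).aedisjoint)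
    have hall : {i : s | 0 < μ (closedBall (i : X) (ε / 4))} = univ :=
      eq_univ_of_forall fun i => (h.measure_ball_pos (i : X) (r := ε / 4) (by positivity)).trans_le
        (measure_mono ball_subset_closedBall)
    rw [hall, countable_univ_iff] at this
    exact this
  · obtain ⟨y, hy, hxy⟩ := hcov x (mem_univ x)
    have := hxy (mem_closedBall_self (by positivity))
    exact ⟨y, hy, by simpa [mul_div_cancel₀] using this⟩

/-- In a geodesic doubling space spheres have measure zero: they are porous. -/
lemma measure_sphere [BorelSpace X] (h : IsDoublingWith μ Cd) (hCd : 1 ≤ Cd)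
    (hg : IsGeodesic X) (x : X) {r : ℝ} (hr : 0 < r) : μ (sphere x r) = 0 := by
  have := h.isUnifLocDoublingMeasure
  have := h.isLocallyFiniteMeasure hCd
  have := h.secondCountableTopology hCd
  have hae := IsUnifLocDoublingMeasure.ae_tendsto_measure_inter_div μ (sphere x r) 1
  rw [ae_restrict_iff' isClosed_sphere.measurableSet] at hae
  rw [measure_eq_zero_iff_ae_notMem]
  filter_upwards [hae] with y hy hys
  have hlim := hy hys (fun _ : ℝ => y) id tendsto_id
    (by
      filter_upwards [self_mem_nhdsWithin] with s (hs : 0 < s)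
      exact mem_closedBall_self (by simpa using hs.le))
  have hyx : dist y x = r := hys
  obtain ⟨γ, hγ, hγ0, hγ1⟩ := hg y x
  rw [hyx] at hγ hγ1
  set c : ℝ≥0 := (Cd ^ 2)⁻¹ with hc
  have hCd0 : 0 < Cd := one_pos.trans_le hCd
  have hbound : ∀ᶠ s : ℝ in 𝓝[>] 0,
      μ (sphere x r ∩ closedBall y s) / μ (closedBall y s) ≤ 1 - c := by
    filter_upwards [Ioo_mem_nhdsGT hr] with s ⟨hs, hsr⟩
    have hs2 : s / 2 ∈ Icc 0 r := ⟨by positivity, by linarith⟩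
    set z := γ (s / 2) with hz
    have hzy : dist z y ≤ s / 2 := by
      have := hγ.dist_le_mul (s / 2) hs2 0 ⟨le_rfl, hr.le⟩
      rw [hγ0] at this
      simpa [Real.dist_eq, abs_of_pos hs] using this
    have hzx : dist z x ≤ r - s / 2 := by
      have := hγ.dist_le_mul (s / 2) hs2 r ⟨hr.le, le_rfl⟩
      rw [hγ1, Real.dist_eq, abs_sub_comm, abs_of_nonneg (by linarith)] at this
      simpa using this
    have hsub : ball z (s / 2) ⊆ closedBall y s \ sphere x r := by
      intro w hw
      rw [mem_ball] at hw
      refine ⟨?_, fun hws => ?_⟩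
      · rw [mem_closedBall]; linarith [dist_triangle w z y]
      · rw [mem_sphere] at hws; linarith [dist_triangle w z x]
    have hpos : 0 < μ (closedBall y s) :=
      (h.measure_ball_pos y hs).trans_le (measure_mono ball_subset_closedBall)
    have hfin : μ (closedBall y s) ≠ ⊤ := (h.measure_closedBall_lt_top hCd y s).ne
    have hbig : μ (closedBall y s) ≤ (Cd ^ 2 : ℝ≥0) * μ (ball z (s / 2)) := by
      refine (measure_mono fun w hw => ?_).trans
        (h.measure_ball_four_mul_le z (r := s / 2) (by positivity))
      rw [mem_closedBall] at hw
      rw [mem_ball]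
      linarith [dist_triangle w y z, dist_comm y z]
    have hc1 : (c : ℝ≥0∞) * μ (closedBall y s) ≤ μ (closedBall y s \ sphere x r) := by
      calc (c : ℝ≥0∞) * μ (closedBall y s)
          ≤ c * ((Cd ^ 2 : ℝ≥0) * μ (ball z (s / 2))) := by gcongr
        _ = μ (ball z (s / 2)) := by
            rw [← mul_assoc, ← ENNReal.coe_mul, hc, inv_mul_cancel₀ (by positivity)]; simp
        _ ≤ _ := measure_mono hsub
    have hadd := measure_inter_add_sdiff (μ := μ) (closedBall y s)
      (isClosed_sphere (x := x) (ε := r)).measurableSet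
    rw [ENNReal.div_le_iff hpos.ne' hfin, ENNReal.sub_mul (fun _ _ => hfin), one_mul,
      inter_comm]
    refine ENNReal.le_sub_of_add_le_right (ENNReal.mul_ne_top ENNReal.coe_ne_top hfin) ?_
    rw [← hadd]
    gcongr
    rw [hadd]; exact hc1
  have hle := le_of_tendsto hlim hbound
  have hclt : (1 : ℝ≥0∞) - c < 1 :=
    ENNReal.sub_lt_self ENNReal.one_ne_top one_ne_zero (by
      rw [hc]; simpa using hCd0.ne')
  exact absurd hle hclt.not_ge

lemma measure_closedBall_eq [BorelSpace X] (h : IsDoublingWith μ Cd) (hCd : 1 ≤ Cd)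
    (hg : IsGeodesic X) (x : X) {r : ℝ} (hr : 0 < r) : μ (closedBall x r) = μ (ball x r) := by
  refine le_antisymm ?_ (measure_mono ball_subset_closedBall)
  rw [← ball_union_sphere]
  exact (measure_union_le _ _).trans (by rw [h.measure_sphere hCd hg x hr, add_zero])

lemma ball_ae_eq_closedBall [BorelSpace X] (h : IsDoublingWith μ Cd) (hCd : 1 ≤ Cd)
    (hg : IsGeodesic X) (x : X) {r : ℝ} (hr : 0 < r) : ball x r =ᵐ[μ] closedBall x r :=
  ae_eq_of_subset_of_measure_ge ball_subset_closedBall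
    (h.measure_closedBall_eq hCd hg x hr).le measurableSet_ball.nullMeasurableSet
    (h.measure_closedBall_lt_top hCd x r).ne

end IsDoublingWith

end Doubling

section LipConst

lemma lipConst_le_of_lipschitzWith {X : Type u} [PseudoMetricSpace X] {v : X → ℝ} {K : ℝ≥0}
    (hv : LipschitzWith K v) (x : X) : lipConst v x ≤ K := by
  refine liminf_le_of_frequently_le' (Eventually.frequently ?_)
  filter_upwards [self_mem_nhdsWithin] with r (hr : 0 < r)
  refine iSup₂_le fun y hy => ENNReal.ofReal_le_of_le_toReal ?_
  rw [ENNReal.coe_toReal, div_le_iff₀ hr]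
  have := hv.dist_le_mul y x
  rw [Real.dist_eq] at this
  exact this.trans (by gcongr; exact (mem_ball.1 hy).le)

lemma lipConst_congr {X : Type u} [PseudoMetricSpace X] {v w : X → ℝ} {x : X} {r : ℝ}
    (hr : 0 < r) (h : EqOn v w (ball x r)) : lipConst v x = lipConst w x := by
  refine liminf_congr ?_
  filter_upwards [Ioo_mem_nhdsGT hr] with s hs
  refine iSup_congr fun y => iSup_congr fun hy => ?_
  rw [h (ball_subset_ball hs.2.le hy), h (mem_ball_self hr)]

lemma lipConst_eq_iSup_iInf_rat {X : Type u} [PseudoMetricSpace X] (v : X → ℝ) (x : X) :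
    lipConst v x = ⨆ n : ℕ, ⨅ q : {q : ℚ // 0 < q ∧ (q : ℝ) < 1 / (n + 1)},
      ⨆ y ∈ ball x (q : ℝ), ENNReal.ofReal (|v y - v x| / (q : ℝ)) := by
  have hb : (𝓝[>] (0 : ℝ)).HasBasis (fun _ : ℕ => True) fun n => Ioo 0 (1 / ((n : ℝ) + 1)) := by
    refine (nhdsGT_basis (0 : ℝ)).to_hasBasis (fun ε hε => ?_) fun n _ =>
      ⟨1 / ((n : ℝ) + 1), by positivity, subset_rfl⟩
    obtain ⟨n, hn⟩ := exists_nat_one_div_lt hε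
    exact ⟨n, trivial, Ioo_subset_Ioo_right hn.le⟩
  rw [lipConst, hb.liminf_eq_iSup_iInf]
  simp only [iSup_true]
  refine iSup_congr fun n => le_antisymm ?_ ?_
  · refine le_iInf fun q => iInf₂_le (q : ℝ) ⟨?_, q.2.2⟩
    exact_mod_cast q.2.1
  · refine le_iInf₂ fun r hr => ENNReal.le_of_forall_pos_le_add fun ε hε hfin => ?_
    set S := ⨆ y ∈ ball x r, ENNReal.ofReal (|v y - v x| / r) with hS
    have hSS : ∀ y ∈ ball x r, |v y - v x| ≤ r * S.toReal := by
      intro y hy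
      have : ENNReal.ofReal (|v y - v x| / r) ≤ S :=
        le_iSup₂ (f := fun y (_ : y ∈ ball x r) => ENNReal.ofReal (|v y - v x| / r)) y hy
      rw [ENNReal.ofReal_le_iff_le_toReal hfin.ne, div_le_iff₀ hr.1] at this
      linarith
    have hS0 : 0 ≤ S.toReal := ENNReal.toReal_nonneg
    obtain ⟨q, hq1, hq2⟩ := exists_rat_btwn (show r * S.toReal / (S.toReal + ε) < r by
      rw [div_lt_iff₀ (by positivity)]
      nlinarith [hr.1, show (0 : ℝ) < ε from hε])
    have hq0 : (0 : ℝ) < q := lt_of_le_of_lt (by have := hr.1; positivity) hq1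
    refine (iInf_le _ ⟨q, by exact_mod_cast hq0, hq2.trans hr.2⟩).trans ?_
    refine iSup₂_le fun y hy => ?_
    rw [← ENNReal.ofReal_toReal hfin.ne, ← ENNReal.ofReal_coe_nnreal,
      ← ENNReal.ofReal_add hS0 ε.coe_nonneg]
    refine ENNReal.ofReal_le_ofReal ?_
    rw [div_le_iff₀ hq0]
    rw [div_lt_iff₀ (by positivity)] at hq1
    have := hSS y (ball_subset_ball hq2.le hy)
    linarith

lemma measurable_lipConst {X : Type u} [PseudoMetricSpace X] [MeasurableSpace X]
    [OpensMeasurableSpace X] {v : X → ℝ} (hv : Continuous v) : Measurable (lipConst v) := by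
  rw [funext (lipConst_eq_iSup_iInf_rat v)]
  refine Measurable.iSup fun n => Measurable.iInf fun q => ?_
  refine measurable_of_Ioi fun a => IsOpen.measurableSet ?_
  have : (fun x => ⨆ y ∈ ball x (q : ℝ), ENNReal.ofReal (|v y - v x| / (q : ℝ))) ⁻¹' Ioi a =
      ⋃ y, {x | dist y x < (q : ℝ)} ∩ {x | a < ENNReal.ofReal (|v y - v x| / (q : ℝ))} := by
    ext x
    simp [lt_iSup_iff]
  rw [this]
  refine isOpen_iUnion fun y => (isOpen_lt (by fun_prop) continuous_const).inter
    (isOpen_lt continuous_const (ENNReal.continuous_ofReal.comp (by fun_prop)))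

/-- Along a `1`-Lipschitz curve, the derivative of `v` is controlled by `lipConst v`. -/
lemma ofReal_abs_le_lipConst_of_hasDerivAt {X : Type u} [PseudoMetricSpace X] {v : X → ℝ}
    {γ : ℝ → X} (hγ : LipschitzWith 1 γ) {t a : ℝ} (h : HasDerivAt (v ∘ γ) a t) :
    ENNReal.ofReal |a| ≤ lipConst v (γ t) := by
  refine ENNReal.le_of_forall_nnreal_lt fun b hb => ?_
  have hba : (b : ℝ) < |a| := by
    rwa [← ENNReal.ofReal_coe_nnreal, ENNReal.ofReal_lt_ofReal_iff_of_nonneg b.coe_nonneg] at hb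
  obtain ⟨ρ, hρ0, hρ1, hρ⟩ : ∃ ρ : ℝ, 0 < ρ ∧ ρ < 1 ∧ (b : ℝ) < ρ * |a| := by
    have ha : 0 < |a| := b.coe_nonneg.trans_lt hba
    obtain ⟨ρ, h1, h2⟩ := exists_between ((div_lt_one ha).2 hba)
    exact ⟨ρ, (div_nonneg b.coe_nonneg ha.le).trans_lt h1, h2, (div_lt_iff₀ ha).1 h1⟩
  have hslope := (h.tendsto_slope_zero_right.abs.const_mul ρ).eventually (lt_mem_nhds hρ)
  have hscale : Tendsto (fun r : ℝ => ρ * r) (𝓝[>] 0) (𝓝[>] 0) := by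
    refine tendsto_nhdsWithin_iff.2 ⟨?_, ?_⟩
    · exact (Continuous.tendsto' (by fun_prop) (0 : ℝ) 0 (mul_zero ρ)).mono_left nhdsWithin_le_nhds
    · filter_upwards [self_mem_nhdsWithin] with r (hr : 0 < r)
      exact mul_pos hρ0 hr
  refine le_liminf_of_le (by isBoundedDefault) ?_
  filter_upwards [hscale.eventually hslope, self_mem_nhdsWithin] with r hr (hr0 : 0 < r)
  have hmem : γ (t + ρ * r) ∈ ball (γ t) r := by
    have := hγ.dist_le_mul (t + ρ * r) t
    rw [Real.dist_eq, add_sub_cancel_left, abs_of_pos (by positivity)] at this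
    rw [mem_ball]
    have : ρ * r < r := by nlinarith
    simp at *
    linarith
  refine le_trans ?_ (le_iSup₂ (f := fun y (_ : y ∈ ball (γ t) r) =>
    ENNReal.ofReal (|v y - v (γ t)| / r)) _ hmem)
  rw [← ENNReal.ofReal_coe_nnreal]
  refine ENNReal.ofReal_le_ofReal (hr.le.trans_eq ?_)
  simp only [Function.comp_apply, smul_eq_mul, abs_mul, abs_inv, abs_of_pos hρ0, abs_of_pos hr0]
  field_simp

lemma isUpperGradientOf_lipConst {X : Type u} [PseudoMetricSpace X] [MeasurableSpace X]
    [BorelSpace X] {v : X → ℝ} {K : ℝ≥0} (hv : LipschitzWith K v) :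
    IsUpperGradientOf (fun x => (lipConst v x).toReal) v := by
  intro L hL γ hγ
  set η : ℝ → X := IccExtend hL ((Icc 0 L).domRestrict γ) with hη_def
  have hη : LipschitzWith 1 η := by
    have := hγ.to_restrict.comp (LipschitzWith.projIcc hL)
    rwa [one_mul] at this
  have hηγ : EqOn η γ (Icc 0 L) := fun t ht => by
    rw [hη_def, IccExtend_of_mem hL _ ht]; rfl
  have hvη : LipschitzWith (K * 1) (v ∘ η) := hv.comp hη
  have hac : AbsolutelyContinuousOnInterval (v ∘ η) 0 L :=
    hvη.lipschitzOnWith.absolutelyContinuousOnInterval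
  have hint := hac.integral_deriv_eq_sub
  have hmeas : Measurable fun x => (lipConst v x).toReal :=
    (measurable_lipConst hv.continuous).ennreal_toReal
  have hcongr : ∫ t in (0 : ℝ)..L, (lipConst v (γ t)).toReal =
      ∫ t in (0 : ℝ)..L, (lipConst v (η t)).toReal := by
    refine intervalIntegral.integral_congr fun t ht => ?_
    rw [uIcc_of_le hL] at ht
    simp only [hηγ ht]
  rw [hcongr, abs_sub_comm, ← hηγ ⟨le_rfl, hL⟩, ← hηγ ⟨hL, le_rfl⟩]
  rw [Function.comp_apply, Function.comp_apply] at hint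
  rw [← hint, ← Real.norm_eq_abs]
  refine intervalIntegral.norm_integral_le_of_norm_le hL ?_ ?_
  · filter_upwards [hvη.ae_differentiableAt] with t ht _
    have hlt : lipConst v (η t) ≠ ⊤ :=
      ((lipConst_le_of_lipschitzWith hv _).trans_lt ENNReal.coe_lt_top).ne
    exact (ENNReal.ofReal_le_iff_le_toReal hlt).1
      (ofReal_abs_le_lipConst_of_hasDerivAt hη ht.hasDerivAt)
  · rw [intervalIntegrable_iff]
    refine Measure.integrableOn_of_bounded (M := K) (by simp)
      (hmeas.comp hη.continuous.measurable).aestronglyMeasurable (Eventually.of_forall fun t => ?_)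
    rw [Real.norm_of_nonneg ENNReal.toReal_nonneg]
    exact ENNReal.toReal_le_coe_of_le_coe (lipConst_le_of_lipschitzWith hv _)

end LipConst

section TotalVariation

variable {X : Type u} [PseudoMetricSpace X] [MeasurableSpace X] {μ : Measure X}

lemma LocallyLipschitzOnSet.mono {X : Type u} [PseudoMetricSpace X] {v : X → ℝ}
    {U V : Set X} (hv : LocallyLipschitzOnSet v V) (h : U ⊆ V) : LocallyLipschitzOnSet v U :=
  fun K hK hb hKU => hv K hK hb (hKU.trans h)

lemma TendstoL1loc.mono {us : ℕ → X → ℝ} {f : X → ℝ} {U V : Set X} (hus : TendstoL1loc μ us f V)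
    (h : U ⊆ V) : TendstoL1loc μ us f U :=
  fun K hK hb hKU => hus K hK hb (hKU.trans h)

/-- The total variation is superadditive on countable disjoint families of measurable sets. -/
lemma tsum_totVarOn_le {ι : Type*} [Countable ι] {f : X → ℝ} {U : ι → Set X} {V : Set X}
    (hm : ∀ i, MeasurableSet (U i)) (hd : Pairwise (Function.onFun Disjoint U))
    (hUV : ∀ i, U i ⊆ V) : ∑' i, totVarOn μ f (U i) ≤ totVarOn μ f V := by
  refine le_iInf fun us => le_iInf fun hlip => le_iInf fun hlim => ?_
  let _ : MeasurableSpace ι := ⊤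
  calc ∑' i, totVarOn μ f (U i)
      ≤ ∑' i, liminf (fun n => ∫⁻ x in U i, lipConst (us n) x ∂μ) atTop := by
        refine ENNReal.tsum_le_tsum fun i => ?_
        have h1 : ∀ n, LocallyLipschitzOnSet (us n) (U i) := fun n => (hlip n).mono (hUV i)
        have h2 : TendstoL1loc μ us f (U i) := hlim.mono (hUV i)
        exact iInf_le_of_le us (iInf_le_of_le h1 (iInf_le _ h2))
    _ = ∫⁻ i, liminf (fun n => ∫⁻ x in U i, lipConst (us n) x ∂μ) atTop ∂Measure.count := by
        rw [lintegral_count]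
    _ ≤ liminf (fun n => ∫⁻ i, ∫⁻ x in U i, lipConst (us n) x ∂μ ∂Measure.count) atTop :=
        lintegral_liminf_le fun n => measurable_from_top
    _ ≤ liminf (fun n => ∫⁻ x in V, lipConst (us n) x ∂μ) atTop := by
        refine liminf_le_liminf (Eventually.of_forall fun n => ?_)
        simp only [lintegral_count]
        rw [← lintegral_iUnion hm hd]
        exact lintegral_mono_set (iUnion_subset hUV)

lemma totVarOn_mono {f : X → ℝ} {U V : Set X} (h : U ⊆ V) :
    totVarOn μ f U ≤ totVarOn μ f V := by
  refine le_iInf fun us => le_iInf fun hlip => le_iInf fun hlim => ?_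
  have h1 : ∀ n, LocallyLipschitzOnSet (us n) U := fun n => (hlip n).mono h
  have h2 : TendstoL1loc μ us f U := hlim.mono h
  refine le_trans (b := liminf (fun i => ∫⁻ x in U, lipConst (us i) x ∂μ) atTop)
    (iInf_le_of_le us (iInf_le_of_le h1 (iInf_le _ h2))) ?_
  exact liminf_le_liminf (Eventually.of_forall fun n => lintegral_mono_set h)

end TotalVariation

section Differentiation

variable {X : Type u} [MetricSpace X] [MeasurableSpace X] [BorelSpace X] {μ : Measure X}
  {Cd : ℝ≥0}

/-- Vitali covering theorem by open balls in a geodesic doubling space. -/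
lemma IsDoublingWith.exists_disjoint_ball_covering_ae (h : IsDoublingWith μ Cd) (hCd : 1 ≤ Cd)
    (hg : IsGeodesic X) (s : Set X) (P : X → ℝ → Prop)
    (hP : ∀ x ∈ s, ∃ᶠ r : ℝ in 𝓝[>] 0, P x r) :
    ∃ t : Set (X × ℝ), t.Countable ∧ (∀ p ∈ t, P p.1 p.2) ∧
      (t.PairwiseDisjoint fun p => ball p.1 p.2) ∧
      μ (s \ ⋃ p ∈ t, ball p.1 p.2) = 0 := by
  have := h.isLocallyFiniteMeasure hCd
  have := h.secondCountableTopology hCd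
  have hdoub : ∀ p ∈ {p : X × ℝ | 0 < p.2 ∧ P p.1 p.2},
      μ (closedBall p.1 (3 * p.2)) ≤ (Cd ^ 2 : ℝ≥0) * μ (closedBall p.1 p.2) := by
    intro p hp
    have hp0 : 0 < p.2 := hp.1
    calc μ (closedBall p.1 (3 * p.2)) ≤ μ (ball p.1 (4 * p.2)) :=
          measure_mono (closedBall_subset_ball (by linarith))
      _ ≤ (Cd ^ 2 : ℝ≥0) * μ (ball p.1 p.2) := h.measure_ball_four_mul_le p.1 hp0
      _ ≤ (Cd ^ 2 : ℝ≥0) * μ (closedBall p.1 p.2) := by gcongr; exact ball_subset_closedBall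
  have hfine : ∀ x ∈ s, ∀ ε > (0 : ℝ),
      ∃ p ∈ {p : X × ℝ | 0 < p.2 ∧ P p.1 p.2}, p.2 ≤ ε ∧ p.1 = x := by
    intro x hx ε hε
    obtain ⟨r, hr, hr'⟩ := ((hP x hx).and_eventually (Ioc_mem_nhdsGT hε)).exists
    exact ⟨(x, r), ⟨hr'.1, hr⟩, hr'.2, rfl⟩
  obtain ⟨t, ht, htc, hdisj, hcov⟩ := Vitali.exists_disjoint_covering_ae μ s
    {p : X × ℝ | 0 < p.2 ∧ P p.1 p.2} (Cd ^ 2) (fun p => p.2) (fun p => p.1)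
    (fun p => closedBall p.1 p.2) (fun _ _ => subset_rfl) hdoub
    (fun p hp => (nonempty_ball.2 hp.1).mono ball_subset_interior_closedBall)
    (fun _ _ => isClosed_closedBall) hfine
  refine ⟨t, htc, fun p hp => (ht hp).2, hdisj.mono_on fun p _ => ball_subset_closedBall, ?_⟩
  have hsph : μ (⋃ p ∈ t, sphere p.1 p.2) = 0 :=
    (measure_biUnion_null_iff htc).2 fun p hp => h.measure_sphere hCd hg p.1 (ht hp).1
  refine measure_mono_null (fun x hx => ?_) (measure_union_null hcov hsph)
  by_cases hxc : x ∈ ⋃ p ∈ t, closedBall p.1 p.2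
  · right
    simp only [mem_iUnion] at hxc ⊢
    obtain ⟨p, hp, hxp⟩ := hxc
    refine ⟨p, hp, ?_⟩
    rw [← ball_union_sphere] at hxp
    exact hxp.resolve_left fun hxb => hx.2 (mem_biUnion hp hxb)
  · exact Or.inl ⟨hx.1, hxc⟩

/-- Superadditivity on countable disjoint families of balls. -/
def BallSuperadditive (F : Set X → ℝ≥0∞) : Prop :=
  ∀ t : Set (X × ℝ), t.Countable → (t.PairwiseDisjoint fun p => ball p.1 p.2) →
    ∀ V : Set X, (∀ p ∈ t, ball p.1 p.2 ⊆ V) → ∑' p : t, F (ball p.1.1 p.1.2) ≤ F V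

lemma ballSuperadditive_totVarOn (f : X → ℝ) : BallSuperadditive (totVarOn μ f) := by
  intro t ht hd V hV
  have := ht.to_subtype
  exact tsum_totVarOn_le (fun _ => measurableSet_ball)
    (fun i j hij => hd i.2 j.2 (Subtype.coe_ne_coe.2 hij)) fun i => hV i.1 i.2

variable {F : Set X → ℝ≥0∞}

lemma BallSuperadditive.mul_measure_le (hF : BallSuperadditive F) (h : IsDoublingWith μ Cd)
    (hCd : 1 ≤ Cd) (hg : IsGeodesic X) {s U : Set X} (hU : IsOpen U) (hsU : s ⊆ U) (q : ℝ≥0∞)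
    (hq : ∀ x ∈ s, ∃ᶠ r : ℝ in 𝓝[>] 0, q * μ (ball x r) ≤ F (ball x r)) :
    q * μ s ≤ F U := by
  obtain ⟨t, htc, htP, htd, hcov⟩ := h.exists_disjoint_ball_covering_ae hCd hg s
    (fun x r => q * μ (ball x r) ≤ F (ball x r) ∧ ball x r ⊆ U)
    (fun x hx => (hq x hx).and_eventually ((eventually_ball_subset
        (hU.mem_nhds (hsU hx))).filter_mono nhdsWithin_le_nhds))
  have := htc.to_subtype
  calc q * μ s ≤ q * μ (⋃ p ∈ t, ball p.1 p.2) := by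
        gcongr 1
        exact measure_mono_ae (ae_le_set.2 hcov)
    _ ≤ q * ∑' p : t, μ (ball p.1.1 p.1.2) := by gcongr; exact measure_biUnion_le _ htc _
    _ = ∑' p : t, q * μ (ball p.1.1 p.1.2) := ENNReal.tsum_mul_left.symm
    _ ≤ ∑' p : t, F (ball p.1.1 p.1.2) := ENNReal.tsum_le_tsum fun p => (htP p p.2).1
    _ ≤ F U := hF t htc htd U fun p hp => (htP p hp).2

lemma BallSuperadditive.measure_eq_zero_of_upcrossing (hF : BallSuperadditive F)
    (h : IsDoublingWith μ Cd) (hCd : 1 ≤ Cd) (hg : IsGeodesic X) {s : Set X} (hs : μ s ≠ ⊤)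
    {p : ℝ≥0} {q : ℝ≥0∞} (hpq : p < q)
    (hp : ∀ x ∈ s, ∃ᶠ r : ℝ in 𝓝[>] 0, F (ball x r) ≤ p * μ (ball x r))
    (hq : ∀ x ∈ s, ∃ᶠ r : ℝ in 𝓝[>] 0, q * μ (ball x r) ≤ F (ball x r)) : μ s = 0 := by
  have := h.isLocallyFiniteMeasure hCd
  have := h.secondCountableTopology hCd
  have hle : q * μ s ≤ p * μ s := by
    refine ENNReal.le_of_forall_pos_le_add fun ε hε _ => ?_
    obtain ⟨U, hsU, hU, hμU⟩ := s.exists_isOpen_le_add μ (ε := (ε / (p + 1) : ℝ≥0))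
      (by simpa using hε.ne')
    obtain ⟨t, htc, htP, htd, hcov⟩ := h.exists_disjoint_ball_covering_ae hCd hg s
      (fun x r => F (ball x r) ≤ p * μ (ball x r) ∧ ball x r ⊆ U)
      (fun x hx => (hp x hx).and_eventually ((eventually_ball_subset
        (hU.mem_nhds (hsU hx))).filter_mono nhdsWithin_le_nhds))
    have := htc.to_subtype
    calc q * μ s ≤ q * μ (⋃ p ∈ t, s ∩ ball p.1 p.2) := by
          gcongr 1
          refine measure_mono_ae (ae_le_set.2 ?_)
          rwa [← inter_iUnion₂, sdiff_self_inter]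
      _ ≤ q * ∑' p : t, μ (s ∩ ball p.1.1 p.1.2) := by gcongr; exact measure_biUnion_le _ htc _
      _ = ∑' p : t, q * μ (s ∩ ball p.1.1 p.1.2) := ENNReal.tsum_mul_left.symm
      _ ≤ ∑' p : t, F (ball p.1.1 p.1.2) := ENNReal.tsum_le_tsum fun p =>
          hF.mul_measure_le h hCd hg isOpen_ball inter_subset_right q fun x hx => hq x hx.1
      _ ≤ ∑' i : t, p * μ (ball i.1.1 i.1.2) := ENNReal.tsum_le_tsum fun i => (htP i i.2).1
      _ = p * ∑' i : t, μ (ball i.1.1 i.1.2) := ENNReal.tsum_mul_left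
      _ = p * μ (⋃ i ∈ t, ball i.1 i.2) := by
          rw [measure_biUnion htc htd fun _ _ => measurableSet_ball]
      _ ≤ p * (μ s + (ε / (p + 1) : ℝ≥0)) := by
          gcongr
          exact (measure_mono (iUnion₂_subset fun i hi => (htP i hi).2)).trans hμU
      _ ≤ p * μ s + ε := by
          rw [mul_add, ← ENNReal.coe_mul]
          gcongr
          rw [← mul_div_assoc, div_le_iff₀ (by positivity), mul_comm]
          gcongr
          exact le_self_add
  by_contra h0
  exact ((ENNReal.mul_lt_mul_iff_left h0 hs).2 hpq).not_ge hle

/-- A finite ball-superadditive set function has a finite derivative almost everywhere. -/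
theorem BallSuperadditive.ae_exists_tendsto (hF : BallSuperadditive F)
    (h : IsDoublingWith μ Cd) (hCd : 1 ≤ Cd) (hg : IsGeodesic X) (hfin : F univ < ⊤) :
    ∀ᵐ x ∂μ, ∃ D : ℝ≥0, Tendsto (fun r : ℝ => F (ball x r) / μ (ball x r)) (𝓝[>] 0) (𝓝 D) := by
  have := h.secondCountableTopology hCd
  obtain ⟨d, hdc, hdd⟩ := TopologicalSpace.exists_countable_dense ℝ≥0∞
  have hpos : ∀ x, ∀ᶠ r : ℝ in 𝓝[>] 0, μ (ball x r) ≠ 0 := fun x => by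
    filter_upwards [self_mem_nhdsWithin] with r hr using (h.measure_ball_pos x hr).ne'
  have hne : ∀ (x : X) (r : ℝ), μ (ball x r) ≠ ⊤ := fun x r => (h.measure_ball_lt_top hCd x r).ne
  have hlow : ∀ (x : X) (a : ℝ≥0∞),
      (∃ᶠ r : ℝ in 𝓝[>] 0, F (ball x r) / μ (ball x r) < a) →
        ∃ᶠ r : ℝ in 𝓝[>] 0, F (ball x r) ≤ a * μ (ball x r) := fun x a ha =>
    (ha.and_eventually (hpos x)).mono fun r hr => (ENNReal.div_le_iff hr.2 (hne x r)).1 hr.1.le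
  have hupp : ∀ (x : X) (b : ℝ≥0∞),
      (∃ᶠ r : ℝ in 𝓝[>] 0, b < F (ball x r) / μ (ball x r)) →
        ∃ᶠ r : ℝ in 𝓝[>] 0, b * μ (ball x r) ≤ F (ball x r) := fun x b hb =>
    (hb.and_eventually (hpos x)).mono fun r hr =>
      (ENNReal.le_div_iff_mul_le (Or.inl hr.2) (Or.inl (hne x r))).1 hr.1.le
  have hcross : ∀ a ∈ d, ∀ b ∈ d, a < b → ∀ᵐ x ∂μ,
      ¬((∃ᶠ r : ℝ in 𝓝[>] 0, F (ball x r) / μ (ball x r) < a) ∧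
        ∃ᶠ r : ℝ in 𝓝[>] 0, b < F (ball x r) / μ (ball x r)) := by
    intro a _ b _ hab
    lift a to ℝ≥0 using hab.ne_top
    simp only [ae_iff, not_not]
    refine measure_null_of_locally_null _ fun x _ =>
      ⟨_, inter_mem_nhdsWithin _ (ball_mem_nhds x one_pos), ?_⟩
    exact hF.measure_eq_zero_of_upcrossing h hCd hg
      (measure_ne_top_of_subset inter_subset_right (hne x 1)) hab
      (fun y hy => hlow y a hy.1.1) (fun y hy => hupp y b hy.1.2)
  have htop : ∀ᵐ x ∂μ,
      ¬ Tendsto (fun r : ℝ => F (ball x r) / μ (ball x r)) (𝓝[>] 0) (𝓝 ⊤) := by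
    simp only [ae_iff, not_not]
    by_contra h0
    obtain ⟨n, hn⟩ := ENNReal.exists_nat_mul_gt h0 hfin.ne
    refine hn.not_ge (hF.mul_measure_le h hCd hg isOpen_univ (subset_univ _) n fun x hx => ?_)
    exact hupp x n (hx.eventually (lt_mem_nhds (ENNReal.natCast_lt_top n))).frequently
  have hcross' : ∀ᵐ x ∂μ, ∀ a ∈ d, ∀ b ∈ d, a < b →
      ¬((∃ᶠ r : ℝ in 𝓝[>] 0, F (ball x r) / μ (ball x r) < a) ∧
        ∃ᶠ r : ℝ in 𝓝[>] 0, b < F (ball x r) / μ (ball x r)) := by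
    simp only [ae_ball_iff hdc, ae_all_iff]
    exact hcross
  filter_upwards [hcross', htop] with x hx hxt
  obtain ⟨c, hc⟩ := tendsto_of_no_upcrossings hdd hx
  have hc' : c ≠ ⊤ := fun hct => hxt (hct ▸ hc)
  lift c to ℝ≥0 using hc'
  exact ⟨c, hc⟩

end Differentiation

section Poincare

lemma integral_abs_sub_average_le {X : Type*} [MeasurableSpace X] {ν : Measure X}
    [IsFiniteMeasure ν] {f v : X → ℝ} (hf : Integrable f ν) (hv : Integrable v ν) :
    ∫ y, |f y - ⨍ z, f z ∂ν| ∂ν ≤ ∫ y, |v y - ⨍ z, v z ∂ν| ∂ν + 2 * ∫ y, |v y - f y| ∂ν := by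
  have hfv : Integrable (fun y => |v y - f y|) ν := (hv.sub hf).abs
  have hvc : Integrable (fun y => |v y - ⨍ z, v z ∂ν|) ν := (hv.sub (integrable_const _)).abs
  have hav : |(⨍ z, v z ∂ν) - ⨍ z, f z ∂ν| ≤ ⨍ z, |v z - f z| ∂ν := by
    simp only [average_eq, smul_eq_mul]
    rw [← mul_sub, ← integral_sub hv hf, abs_mul, abs_of_nonneg (by positivity)]
    gcongr
    exact abs_integral_le_integral_abs
  calc ∫ y, |f y - ⨍ z, f z ∂ν| ∂ν
      ≤ ∫ y, (|v y - ⨍ z, v z ∂ν| + |v y - f y| + ⨍ z, |v z - f z| ∂ν) ∂ν := by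
        refine integral_mono (hf.sub (integrable_const _)).abs
          ((hvc.add hfv).add (integrable_const _)) fun y => ?_
        have h1 := abs_sub_le (f y) (v y) (⨍ z, f z ∂ν)
        have h2 := abs_sub_le (v y) (⨍ z, v z ∂ν) (⨍ z, f z ∂ν)
        rw [abs_sub_comm (f y) (v y)] at h1
        simp only
        linarith
    _ = ∫ y, |v y - ⨍ z, v z ∂ν| ∂ν + 2 * ∫ y, |v y - f y| ∂ν := by
        have h1 := integral_add (hvc.add hfv) (integrable_const (μ := ν) (⨍ z, |v z - f z| ∂ν))
        simp only [Pi.add_apply] at h1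
        rw [h1, integral_add hvc hfv, integral_const, measure_smul_average]
        ring

variable {X : Type u} [MetricSpace X] [MeasurableSpace X] [BorelSpace X] {μ : Measure X}
  {Cd : ℝ≥0}

lemma IsDoublingWith.integrableOn_ball_of_lipschitzWith (h : IsDoublingWith μ Cd) (hCd : 1 ≤ Cd)
    {v : X → ℝ} {K : ℝ≥0} (hv : LipschitzWith K v) (x : X) (r : ℝ) :
    IntegrableOn v (ball x r) μ := by
  refine Measure.integrableOn_of_bounded (M := |v x| + K * r) (h.measure_ball_lt_top hCd x r).ne
    hv.continuous.aestronglyMeasurable ?_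
  refine (ae_restrict_iff' measurableSet_ball).2 (Eventually.of_forall fun y hy => ?_)
  have h1 := hv.dist_le_mul y x
  have h2 : K * dist y x ≤ K * r := by gcongr; exact (mem_ball.1 hy).le
  rw [Real.dist_eq] at h1
  have h3 := abs_sub_abs_le_abs_sub (v y) (v x)
  rw [Real.norm_eq_abs]
  linarith

lemma LocallyLipschitzOnSet.exists_lipschitzWith_eqOn {X : Type u} [PseudoMetricSpace X]
    {v : X → ℝ} {W : Set X} (hv : LocallyLipschitzOnSet v W) {x : X} {r : ℝ} (hW : closedBall x r ⊆ W) :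
    ∃ (K : ℝ≥0) (w : X → ℝ), LipschitzWith K w ∧ EqOn v w (closedBall x r) := by
  obtain ⟨K, hK⟩ := hv _ isClosed_closedBall isBounded_closedBall hW
  obtain ⟨w, hw, hvw⟩ := hK.extend_real
  exact ⟨K, w, hw, hvw⟩

/-- Locally Lipschitz approximation in `L¹_loc` forces integrability on balls. -/
lemma IsDoublingWith.integrableOn_ball (h : IsDoublingWith μ Cd) (hCd : 1 ≤ Cd) {f : X → ℝ}
    (hf : Measurable f) {W : Set X} {us : ℕ → X → ℝ}
    (hlip : ∀ i, LocallyLipschitzOnSet (us i) W) (hlim : TendstoL1loc μ us f W) {x : X} {r : ℝ}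
    (hW : closedBall x r ⊆ W) : IntegrableOn f (ball x r) μ := by
  obtain ⟨i, hi⟩ := ((hlim _ isClosed_closedBall isBounded_closedBall hW).eventually
    (gt_mem_nhds ENNReal.zero_lt_top)).exists
  obtain ⟨K, w, hw, hvw⟩ := (hlip i).exists_lipschitzWith_eqOn hW
  have hwi := h.integrableOn_ball_of_lipschitzWith hCd hw x r
  have hd : IntegrableOn (fun y => w y - f y) (ball x r) μ := by
    refine ⟨(hw.continuous.measurable.sub hf).aestronglyMeasurable, ?_⟩
    rw [hasFiniteIntegral_iff_norm]
    refine lt_of_le_of_lt ?_ hi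
    calc ∫⁻ y in ball x r, ENNReal.ofReal ‖w y - f y‖ ∂μ
        ≤ ∫⁻ y in closedBall x r, ENNReal.ofReal ‖w y - f y‖ ∂μ :=
          lintegral_mono_set ball_subset_closedBall
      _ = ∫⁻ y in closedBall x r, ENNReal.ofReal |us i y - f y| ∂μ :=
          setLIntegral_congr_fun isClosed_closedBall.measurableSet fun y hy => by
            simp only [hvw hy, Real.norm_eq_abs]
  have := hwi.sub hd
  refine this.congr (Eventually.of_forall fun y => ?_)
  simp

/-- The Poincaré inequality for globally Lipschitz functions, in integrated form. -/
lemma SupportsPoincare.ofReal_integral_abs_sub_average_le {CP : ℝ} (hP : SupportsPoincare μ CP)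
    (hCP : 0 < CP) (h : IsDoublingWith μ Cd) (hCd : 1 ≤ Cd) {v : X → ℝ} {K : ℝ≥0}
    (hv : LipschitzWith K v) (x : X) {r : ℝ} (hr : 0 < r) :
    ENNReal.ofReal (∫ y in ball x r, |v y - ⨍ z in ball x r, v z ∂μ| ∂μ) ≤
      ENNReal.ofReal (CP * r) * ∫⁻ y in ball x r, lipConst v y ∂μ := by
  have hlt : ∀ y, lipConst v y < ⊤ := fun y =>
    (lipConst_le_of_lipschitzWith hv y).trans_lt ENNReal.coe_lt_top
  have hm := measurable_lipConst hv.continuous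
  have hB : 0 < μ.real (ball x r) :=
    ENNReal.toReal_pos (h.measure_ball_pos x hr).ne' (h.measure_ball_lt_top hCd x r).ne
  have key := hP v (fun s _ _ _ => ⟨K, hv.lipschitzOnWith⟩) (fun y => (lipConst v y).toReal)
    (fun _ => ENNReal.toReal_nonneg) hm.ennreal_toReal (isUpperGradientOf_lipConst hv) x r hr
  rw [setAverage_eq, setAverage_eq μ (fun y => (lipConst v y).toReal), smul_eq_mul, smul_eq_mul,
    mul_left_comm, mul_le_mul_iff_right₀ (inv_pos.2 hB),
    integral_toReal hm.aemeasurable (Eventually.of_forall hlt)] at key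
  calc ENNReal.ofReal (∫ y in ball x r, |v y - ⨍ z in ball x r, v z ∂μ| ∂μ)
      ≤ ENNReal.ofReal (CP * r * (∫⁻ y in ball x r, lipConst v y ∂μ).toReal) :=
        ENNReal.ofReal_le_ofReal key
    _ ≤ ENNReal.ofReal (CP * r) * ∫⁻ y in ball x r, lipConst v y ∂μ := by
        rw [ENNReal.ofReal_mul (by positivity)]
        gcongr
        exact ENNReal.ofReal_toReal_le

/-- The Poincaré inequality for functions of bounded variation. -/
theorem SupportsPoincare.ofReal_integral_abs_sub_average_le_totVarOn {CP : ℝ}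
    (hP : SupportsPoincare μ CP) (hCP : 0 < CP) (h : IsDoublingWith μ Cd) (hCd : 1 ≤ Cd)
    {f : X → ℝ} (hf : Measurable f) (x : X) {r : ℝ} (hr : 0 < r) :
    ENNReal.ofReal (∫ y in ball x r, |f y - ⨍ z in ball x r, f z ∂μ| ∂μ) ≤
      ENNReal.ofReal (CP * r) * totVarOn μ f (ball x (2 * r)) := by
  have hc0 : ENNReal.ofReal (CP * r) ≠ 0 := (ENNReal.ofReal_pos.2 (by positivity)).ne'
  have hdiv : ∀ a b : ℝ≥0∞, a / ENNReal.ofReal (CP * r) ≤ b ↔ a ≤ ENNReal.ofReal (CP * r) * b :=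
    fun a b => by
      rw [ENNReal.div_le_iff_le_mul (Or.inl hc0) (Or.inl ENNReal.ofReal_ne_top), mul_comm]
  rw [← hdiv]
  refine le_iInf fun us => le_iInf fun hlip => le_iInf fun hlim => ?_
  rw [hdiv]
  have hW : closedBall x r ⊆ ball x (2 * r) := closedBall_subset_ball (by linarith)
  have hfi := h.integrableOn_ball hCd hf hlip hlim hW
  have : IsFiniteMeasure (μ.restrict (ball x r)) :=
    ⟨by simpa using h.measure_ball_lt_top hCd x r⟩
  set a := ENNReal.ofReal (∫ y in ball x r, |f y - ⨍ z in ball x r, f z ∂μ| ∂μ)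
  have hstep : ∀ i, a ≤ ENNReal.ofReal (CP * r) * (∫⁻ y in ball x (2 * r), lipConst (us i) y ∂μ) +
      2 * ∫⁻ y in closedBall x r, ENNReal.ofReal |us i y - f y| ∂μ := by
    intro i
    obtain ⟨K, w, hw, hvw⟩ := (hlip i).exists_lipschitzWith_eqOn hW
    have hwi := h.integrableOn_ball_of_lipschitzWith hCd hw x r
    have hwf : Integrable (fun y => |w y - f y|) (μ.restrict (ball x r)) := (hwi.sub hfi).abs
    calc a ≤ ENNReal.ofReal (∫ y in ball x r, |w y - ⨍ z in ball x r, w z ∂μ| ∂μ +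
          2 * ∫ y in ball x r, |w y - f y| ∂μ) :=
          ENNReal.ofReal_le_ofReal (integral_abs_sub_average_le hfi hwi)
      _ = ENNReal.ofReal (∫ y in ball x r, |w y - ⨍ z in ball x r, w z ∂μ| ∂μ) +
          2 * ∫⁻ y in ball x r, ENNReal.ofReal |w y - f y| ∂μ := by
          rw [ENNReal.ofReal_add (integral_nonneg fun _ => abs_nonneg _)
            (mul_nonneg zero_le_two (integral_nonneg fun _ => abs_nonneg _)),
            ENNReal.ofReal_mul zero_le_two, ofReal_integral_eq_lintegral_ofReal hwf
              (Eventually.of_forall fun _ => abs_nonneg _)]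
          simp
      _ ≤ _ := by
          refine add_le_add ?_ ?_
          · refine (hP.ofReal_integral_abs_sub_average_le hCP h hCd hw x hr).trans ?_
            gcongr 1
            calc ∫⁻ y in ball x r, lipConst w y ∂μ = ∫⁻ y in ball x r, lipConst (us i) y ∂μ := by
                  refine setLIntegral_congr_fun measurableSet_ball fun y hy => ?_
                  obtain ⟨ε, hε, hεs⟩ := Metric.isOpen_iff.1 isOpen_ball y hy
                  exact (lipConst_congr hε (hvw.mono
                    (hεs.trans ball_subset_closedBall))).symm
              _ ≤ _ := lintegral_mono_set (ball_subset_ball (by linarith))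
          · gcongr 2 * ?_
            calc ∫⁻ y in ball x r, ENNReal.ofReal |w y - f y| ∂μ
                = ∫⁻ y in ball x r, ENNReal.ofReal |us i y - f y| ∂μ := by
                  refine setLIntegral_congr_fun measurableSet_ball fun y hy => ?_
                  simp only [hvw (ball_subset_closedBall hy)]
              _ ≤ _ := lintegral_mono_set ball_subset_closedBall
  refine ENNReal.le_of_forall_pos_le_add fun δ hδ _ => ?_
  have hev : ∀ᶠ i in atTop,
      2 * ∫⁻ y in closedBall x r, ENNReal.ofReal |us i y - f y| ∂μ < δ := by
    have := ENNReal.Tendsto.const_mul (a := 2)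
      (hlim _ isClosed_closedBall isBounded_closedBall hW) (Or.inr ENNReal.ofNat_ne_top)
    rw [mul_zero] at this
    exact this.eventually (gt_mem_nhds (by exact_mod_cast hδ))
  rw [← tsub_le_iff_right, ← hdiv]
  refine le_liminf_of_le (by isBoundedDefault) (hev.mono fun i hi => ?_)
  rw [hdiv, tsub_le_iff_right]
  exact (hstep i).trans (by gcongr)

end Poincare

section LipschitzEstimate

variable {X : Type u} [MetricSpace X] [MeasurableSpace X] {μ : Measure X} {Cd : ℝ≥0} {f : X → ℝ}

/-- The points at which the density of `F` on balls of radius less than `ρ` is at most `q`. -/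
def ballDensityLE (μ : Measure X) (F : Set X → ℝ≥0∞) (q : ℝ≥0) (ρ : ℝ) : Set X :=
  {x | ∀ s : ℝ, 0 < s → s < ρ → F (ball x s) ≤ q * μ (closedBall x s)}

lemma abs_setAverage_sub_le {X : Type*} [MeasurableSpace X] {μ : Measure X}
    {f : X → ℝ} {S B : Set X} (hSB : S ⊆ B) {c : ℝ≥0}
    (hS0 : μ S ≠ 0) (hSB' : μ B ≤ c * μ S) (hBtop : μ B ≠ ⊤) (hf : IntegrableOn f B μ) (a M : ℝ)
    (hM : 0 ≤ M) (hfM : ∫ y in B, |f y - a| ∂μ ≤ M * μ.real B) :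
    |(⨍ y in S, f y ∂μ) - a| ≤ c * M := by
  have hStop : μ S ≠ ⊤ := measure_ne_top_of_subset hSB hBtop
  have hpos : 0 < μ.real S := ENNReal.toReal_pos hS0 hStop
  have : IsFiniteMeasure (μ.restrict B) := ⟨by simpa using hBtop.lt_top⟩
  have hBS : μ.real B ≤ c * μ.real S := by
    have := ENNReal.toReal_mono (ENNReal.mul_ne_top ENNReal.coe_ne_top hStop) hSB'
    simpa [measureReal_def] using this
  have hfa : IntegrableOn (fun y => f y - a) B μ := hf.sub (integrable_const a)
  have hae : IntegrableOn (fun y => |f y - a|) B μ := hfa.abs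
  have hc : μ.real S * ((⨍ y in S, f y ∂μ) - a) = ∫ y in S, (f y - a) ∂μ := by
    rw [integral_sub (hf.mono_set hSB) (integrableOn_const hStop), setIntegral_const, mul_sub,
      setAverage_eq, smul_eq_mul, smul_eq_mul, mul_inv_cancel_left₀ hpos.ne']
  have hkey : μ.real S * |(⨍ y in S, f y ∂μ) - a| ≤ μ.real S * (c * M) := by
    rw [← abs_of_pos hpos, ← abs_mul, hc, abs_of_pos hpos]
    calc |∫ y in S, (f y - a) ∂μ| ≤ ∫ y in S, |f y - a| ∂μ := abs_integral_le_integral_abs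
      _ ≤ ∫ y in B, |f y - a| ∂μ :=
        setIntegral_mono_set hae (Eventually.of_forall fun _ => abs_nonneg _) hSB.eventuallyLE
      _ ≤ M * (c * μ.real S) := hfM.trans (by gcongr)
      _ = μ.real S * (c * M) := by ring
  exact le_of_mul_le_mul_left hkey hpos

variable [BorelSpace X]

lemma isClosed_ballDensityLE (h : IsDoublingWith μ Cd) (hCd : 1 ≤ Cd) {F : Set X → ℝ≥0∞}
    (hF : Monotone F) (q : ℝ≥0) (ρ : ℝ) : IsClosed (ballDensityLE μ F q ρ) := by
  rw [← isOpen_compl_iff, Metric.isOpen_iff]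
  intro x hx
  simp only [ballDensityLE, mem_compl_iff, mem_ofPred_eq, not_forall, not_le] at hx
  obtain ⟨s, hs, hsρ, hlt⟩ := hx
  have hlim : Tendsto (fun r => q * μ (closedBall x r)) (𝓝[>] s) (𝓝 (q * μ (closedBall x s))) := by
    refine ENNReal.Tendsto.const_mul ?_ (Or.inr ENNReal.coe_ne_top)
    have := tendsto_measure_biInter_gt (μ := μ) (s := closedBall x) (a := s)
      (fun r _ => isClosed_closedBall.measurableSet.nullMeasurableSet)
      (fun i j _ hij => closedBall_subset_closedBall hij)
      ⟨s + 1, by simp, (h.measure_closedBall_lt_top hCd x _).ne⟩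
    have hinter : ⋂ r, ⋂ (_ : r > s), closedBall x r = closedBall x s := by
      ext y
      simp only [mem_iInter, mem_closedBall]
      exact ⟨fun hy => le_of_forall_gt_imp_ge_of_dense hy, fun hy r hr => hy.trans hr.le⟩
    rwa [hinter] at this
  obtain ⟨r, hr, hsr, hrρ⟩ :=
    ((hlim.eventually (gt_mem_nhds hlt)).and (Ioo_mem_nhdsGT hsρ)).exists
  refine ⟨(r - s) / 2, by linarith, fun y hy hyE => ?_⟩
  rw [mem_ball] at hy
  refine hr.not_ge ?_
  calc F (ball x s) ≤ F (ball y ((r + s) / 2)) :=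
        hF (ball_subset_ball' (by rw [dist_comm]; linarith))
    _ ≤ q * μ (closedBall y ((r + s) / 2)) := hyE _ (by linarith) (by linarith)
    _ ≤ q * μ (closedBall x r) := by
        gcongr
        exact closedBall_subset_closedBall' (by linarith)

lemma IsDoublingWith.densityZeroAt_compl_union (h : IsDoublingWith μ Cd) (hCd : 1 ≤ Cd)
    (hg : IsGeodesic X) {E N : Set X} (hE : MeasurableSet E) (hN : μ N = 0) :
    ∀ᵐ x ∂μ, x ∈ E → DensityZeroAt μ (Eᶜ ∪ N) x := by
  have := h.isUnifLocDoublingMeasure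
  have := h.isLocallyFiniteMeasure hCd
  have := h.secondCountableTopology hCd
  have hae := IsUnifLocDoublingMeasure.ae_tendsto_measure_inter_div μ E 1
  rw [ae_restrict_iff' hE] at hae
  filter_upwards [hae] with x hx hxE
  have hlim := hx hxE (fun _ : ℝ => x) id tendsto_id (by
    filter_upwards [self_mem_nhdsWithin] with r (hr : 0 < r)
    simpa using hr.le)
  have hlim' := ENNReal.Tendsto.sub (tendsto_const_nhds (x := (1 : ℝ≥0∞))) hlim
    (Or.inl ENNReal.one_ne_top)
  rw [tsub_self] at hlim'
  refine hlim'.congr' ?_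
  filter_upwards [self_mem_nhdsWithin] with r (hr : 0 < r)
  have hb := h.measure_ball_pos x hr
  have hbt := h.measure_ball_lt_top hCd x r
  have h1 : μ (E ∩ closedBall x r) = μ (E ∩ ball x r) :=
    measure_congr ((ae_eq_refl E).inter (h.ball_ae_eq_closedBall hCd hg x hr).symm)
  have h2 : μ ((Eᶜ ∪ N) ∩ ball x r) = μ (ball x r) - μ (E ∩ ball x r) := by
    rw [measure_congr ((union_ae_eq_left_of_ae_eq_empty (s := Eᶜ) (ae_eq_empty.2 hN)).inter
      (ae_eq_refl (ball x r))), ← measure_sdiff inter_subset_right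
      (hE.inter measurableSet_ball).nullMeasurableSet
      (measure_ne_top_of_subset inter_subset_right hbt.ne)]
    congr 1
    ext y
    simp
    tauto
  rw [id, h1, h.measure_closedBall_eq hCd hg x hr, h2, ENNReal.sub_div fun _ _ => hb.ne',
    ENNReal.div_self hb.ne' hbt.ne]

lemma IsDoublingWith.ae_tendsto_setAverage_ball (h : IsDoublingWith μ Cd) (hCd : 1 ≤ Cd)
    (hg : IsGeodesic X) (hf : LocallyIntegrable f μ) :
    ∀ᵐ x ∂μ, Tendsto (fun r : ℝ => ⨍ y in ball x r, f y ∂μ) (𝓝[>] 0) (𝓝 (f x)) := by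
  have := h.isUnifLocDoublingMeasure
  have := h.isLocallyFiniteMeasure hCd
  have := h.secondCountableTopology hCd
  filter_upwards [IsUnifLocDoublingMeasure.ae_tendsto_average μ hf 1] with x hx
  refine (hx (fun _ : ℝ => x) id tendsto_id (by
    filter_upwards [self_mem_nhdsWithin] with r (hr : 0 < r)
    simpa using hr.le)).congr' ?_
  filter_upwards [self_mem_nhdsWithin] with r (hr : 0 < r)
  exact setAverage_congr (h.ball_ae_eq_closedBall hCd hg x hr).symm

section

variable {CP : ℝ} {q : ℝ≥0} {ρ : ℝ}

lemma SupportsPoincare.integral_abs_sub_average_le_of_mem (hP : SupportsPoincare μ CP)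
    (hCP : 0 < CP) (h : IsDoublingWith μ Cd) (hCd : 1 ≤ Cd) (hg : IsGeodesic X)
    (hf : Measurable f) {y : X} (hy : y ∈ ballDensityLE μ (totVarOn μ f) q ρ) {r : ℝ} (hr : 0 < r)
    (hrρ : 2 * r < ρ) :
    ∫ z in ball y r, |f z - ⨍ w in ball y r, f w ∂μ| ∂μ ≤
      CP * r * q * Cd * μ.real (ball y r) := by
  rw [← ENNReal.ofReal_le_ofReal_iff (by positivity)]
  calc ENNReal.ofReal (∫ z in ball y r, |f z - ⨍ w in ball y r, f w ∂μ| ∂μ)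
      ≤ ENNReal.ofReal (CP * r) * totVarOn μ f (ball y (2 * r)) :=
        hP.ofReal_integral_abs_sub_average_le_totVarOn hCP h hCd hf y hr
    _ ≤ ENNReal.ofReal (CP * r) * (q * (Cd * μ (ball y r))) := by
        gcongr
        refine (hy (2 * r) (by positivity) hrρ).trans ?_
        rw [h.measure_closedBall_eq hCd hg y (by positivity)]
        gcongr
        exact h.measure_ball_two_mul_le y hr
    _ = ENNReal.ofReal (CP * r * q * Cd * μ.real (ball y r)) := by
        rw [ENNReal.ofReal_mul (p := CP * r * q * Cd) (by positivity),
          ENNReal.ofReal_mul (p := CP * r * q) (by positivity),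
          ENNReal.ofReal_mul (p := CP * r) (by positivity), ENNReal.ofReal_coe_nnreal,
          ENNReal.ofReal_coe_nnreal,
          ofReal_measureReal (h.measure_ball_lt_top hCd y r).ne]
        ring

lemma SupportsPoincare.abs_sub_setAverage_le_of_mem (hP : SupportsPoincare μ CP)
    (hCP : 0 < CP) (h : IsDoublingWith μ Cd) (hCd : 1 ≤ Cd) (hg : IsGeodesic X)
    (hf : Measurable f) (hfi : ∀ x r, IntegrableOn f (ball x r) μ)
    {y : X} (hy : y ∈ ballDensityLE μ (totVarOn μ f) q ρ)
    (hlim : Tendsto (fun r : ℝ => ⨍ z in ball y r, f z ∂μ) (𝓝[>] 0) (𝓝 (f y)))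
    {r : ℝ} (hr : 0 < r) (hrρ : 2 * r < ρ) :
    |f y - ⨍ z in ball y r, f z ∂μ| ≤ 2 * CP * Cd ^ 2 * q * r := by
  have hs : ∀ n : ℕ, 0 < r / 2 ^ n := fun n => by positivity
  have hlim0 : Tendsto (fun n : ℕ => r / 2 ^ n) atTop (𝓝[>] 0) := by
    refine tendsto_nhdsWithin_iff.2 ⟨?_, Eventually.of_forall hs⟩
    have := (tendsto_pow_atTop_nhds_zero_of_lt_one (r := (1 / 2 : ℝ)) (by norm_num)
      (by norm_num)).const_mul r
    simpa [div_eq_mul_inv] using this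
  have hdist : ∀ n : ℕ, dist (⨍ z in ball y (r / 2 ^ n), f z ∂μ)
      (⨍ z in ball y (r / 2 ^ (n + 1)), f z ∂μ) ≤ 2 * CP * Cd ^ 2 * q * r / 2 / 2 ^ n := by
    intro n
    have hle : r / 2 ^ n ≤ r := div_le_self hr.le (one_le_pow₀ one_le_two)
    have heq : r / 2 ^ n = 2 * (r / 2 ^ (n + 1)) := by rw [pow_succ]; field_simp
    have := abs_setAverage_sub_le (S := ball y (r / 2 ^ (n + 1))) (B := ball y (r / 2 ^ n))
      (ball_subset_ball (by linarith [hs (n + 1)]))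
      (h.measure_ball_pos y (hs (n + 1))).ne'
      (heq ▸ h.measure_ball_two_mul_le y (hs (n + 1))) (h.measure_ball_lt_top hCd y _).ne
      (hfi _ _) _ (CP * (r / 2 ^ n) * q * Cd) (by positivity)
      (hP.integral_abs_sub_average_le_of_mem hCP h hCd hg hf hy (hs n) (by linarith))
    rw [dist_comm, Real.dist_eq]
    refine this.trans (le_of_eq ?_)
    field_simp
  have := dist_le_of_le_geometric_two_of_tendsto₀ hdist (hlim.comp hlim0)
  rw [dist_comm, Real.dist_eq] at this
  simpa using this

/-- Telescoping estimate: at the good points, `f` satisfies a Lipschitz bound. -/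
lemma SupportsPoincare.abs_sub_le_of_mem (hP : SupportsPoincare μ CP)
    (hCP : 0 < CP) (h : IsDoublingWith μ Cd) (hCd : 1 ≤ Cd) (hg : IsGeodesic X)
    (hf : Measurable f) (hfi : ∀ x r, IntegrableOn f (ball x r) μ)
    {y z : X} (hy : y ∈ ballDensityLE μ (totVarOn μ f) q ρ)
    (hz : z ∈ ballDensityLE μ (totVarOn μ f) q ρ)
    (hlimy : Tendsto (fun r : ℝ => ⨍ w in ball y r, f w ∂μ) (𝓝[>] 0) (𝓝 (f y)))
    (hlimz : Tendsto (fun r : ℝ => ⨍ w in ball z r, f w ∂μ) (𝓝[>] 0) (𝓝 (f z)))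
    (hyz : 4 * dist y z < ρ) :
    |f y - f z| ≤ CP * Cd ^ 2 * (6 + 2 * Cd) * q * dist y z := by
  rcases eq_or_ne y z with rfl | hne
  · simp
  have hd : 0 < dist y z := dist_pos.2 hne
  set d := dist y z with hd_def
  have h1 := hP.abs_sub_setAverage_le_of_mem hCP h hCd hg hf hfi hy hlimy
    (r := 2 * d) (by positivity) (by linarith)
  have h2 := hP.abs_sub_setAverage_le_of_mem hCP h hCd hg hf hfi hz hlimz hd (by linarith)
  have h3 := abs_setAverage_sub_le (S := ball z d) (B := ball y (2 * d))
    (ball_subset_ball' (by rw [dist_comm, ← hd_def]; linarith))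
    (h.measure_ball_pos z hd).ne'
    ((measure_mono (ball_subset_ball' (by linarith))).trans (h.measure_ball_four_mul_le z hd))
    (h.measure_ball_lt_top hCd y _).ne (hfi _ _) _ (CP * (2 * d) * q * Cd) (by positivity)
    (hP.integral_abs_sub_average_le_of_mem hCP h hCd hg hf hy (r := 2 * d) (by positivity)
      (by linarith))
  push_cast at h3
  rw [abs_le] at *
  constructor <;> nlinarith

end

end LipschitzEstimate

theorem statement5 (Cd : ℝ≥0) (CP : ℝ) (hCd : 1 ≤ Cd) (hCP : 0 < CP) :
    ∃ C : ℝ, 1 ≤ C ∧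
      ∀ (X : Type u) [MetricSpace X] [MeasurableSpace X] [BorelSpace X]
        (μ : Measure X), GoodSpace X μ Cd CP →
        ∀ u : X → ℝ, IsBV μ u → PreciseRep μ u →
          ∀ᵐ x ∂μ, ∃ D : ℝ≥0,
            Tendsto (fun r : ℝ => totVarOn μ u (ball x r) / μ (ball x r))
              (𝓝[>] (0:ℝ)) (𝓝 (D : ℝ≥0∞)) ∧
            (0 < D → ∃ R : ℝ, 0 < R ∧ ∃ A : Set X, x ∉ A ∧ DensityZeroAt μ A x ∧
              ∀ y ∈ ball x R \ A, ∀ z ∈ ball x R \ A,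
                |u y - u z| ≤ C * (D : ℝ) * dist y z) ∧
            (D = 0 → ∀ δ : ℝ, 0 < δ →
              ∃ R : ℝ, 0 < R ∧ ∃ A : Set X, x ∉ A ∧ DensityZeroAt μ A x ∧
                ∀ y ∈ ball x R \ A, ∀ z ∈ ball x R \ A,
                  |u y - u z| ≤ δ * dist y z) := by
  have hCd0 : (0 : ℝ) < Cd := by exact_mod_cast one_pos.trans_le hCd
  set C₀ : ℝ := CP * Cd ^ 2 * (6 + 2 * Cd) with hC₀
  have hC₀pos : 0 < C₀ := by positivity
  refine ⟨max 1 (2 * C₀), le_max_left _ _, ?_⟩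
  intro X _ _ _ μ ⟨_, _, hg, h, hP⟩ u ⟨hu, hV⟩ ⟨hum, _⟩
  have hfi : ∀ x r, IntegrableOn u (ball x r) μ := by
    obtain ⟨us, hus⟩ := iInf_lt_iff.1 hV
    obtain ⟨hlip, hus⟩ := iInf_lt_iff.1 hus
    obtain ⟨hlim, -⟩ := iInf_lt_iff.1 hus
    exact fun x r => h.integrableOn_ball hCd hum hlip hlim (subset_univ _)
  have havg := h.ae_tendsto_setAverage_ball hCd hg hu
  set N : Set X := {x | ¬ Tendsto (fun r : ℝ => ⨍ y in ball x r, u y ∂μ) (𝓝[>] 0) (𝓝 (u x))}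
    with hN
  obtain ⟨d, hdc, hdd⟩ := TopologicalSpace.exists_countable_dense ℝ≥0
  have hdens : ∀ᵐ x ∂μ, ∀ q ∈ d, ∀ k : ℕ,
      x ∈ ballDensityLE μ (totVarOn μ u) q (1 / ((k : ℝ) + 1)) →
        DensityZeroAt μ ((ballDensityLE μ (totVarOn μ u) q (1 / ((k : ℝ) + 1)))ᶜ ∪ N) x := by
    simp only [ae_ball_iff hdc, ae_all_iff]
    exact fun q _ k => h.densityZeroAt_compl_union hCd hg
      (isClosed_ballDensityLE h hCd (fun _ _ => totVarOn_mono) q _).measurableSet havg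
  filter_upwards [(ballSuperadditive_totVarOn u).ae_exists_tendsto h hCd hg hV, hdens, havg]
    with x ⟨D, hD⟩ hx hxavg
  have hmain : ∀ q ∈ d, D < q → ∃ R : ℝ, 0 < R ∧ ∃ A : Set X, x ∉ A ∧ DensityZeroAt μ A x ∧
      ∀ y ∈ ball x R \ A, ∀ z ∈ ball x R \ A, |u y - u z| ≤ C₀ * q * dist y z := by
    intro q hqd hDq
    obtain ⟨ρ, hρ, hρs⟩ := mem_nhdsGT_iff_exists_Ioo_subset.1
      (hD.eventually (gt_mem_nhds (ENNReal.coe_lt_coe.2 hDq)))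
    obtain ⟨k, hk⟩ := exists_nat_one_div_lt (mem_Ioi.1 hρ)
    have hxE : x ∈ ballDensityLE μ (totVarOn μ u) q (1 / ((k : ℝ) + 1)) := fun s hs hsk => by
      have hlt : totVarOn μ u (ball x s) / μ (ball x s) < q := hρs ⟨hs, hsk.trans hk⟩
      rw [h.measure_closedBall_eq hCd hg x hs]
      exact (ENNReal.div_le_iff (h.measure_ball_pos x hs).ne'
        (h.measure_ball_lt_top hCd x s).ne).1 hlt.le
    refine ⟨1 / ((k : ℝ) + 1) / 8, by positivity, _, ?_, hx q hqd k hxE, fun y hy z hz => ?_⟩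
    · rintro (hxc | hxN)
      exacts [hxc hxE, hxN hxavg]
    · simp only [hN, Set.mem_sdiff, mem_union, mem_compl_iff, mem_ofPred_eq, not_or, not_not,
        mem_ball] at hy hz
      refine hP.abs_sub_le_of_mem hCP h hCd hg hum hfi hy.2.1 hz.2.1 hy.2.2 hz.2.2 ?_
      linarith [dist_triangle_right y z x]
  refine ⟨D, hD, fun hDpos => ?_, fun hD0 δ hδ => ?_⟩
  · obtain ⟨q, hqd, hDq, hq⟩ := hdd.exists_between (lt_mul_of_one_lt_left hDpos one_lt_two)
    obtain ⟨R, hR, A, hxA, hA, hlip⟩ := hmain q hqd hDq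
    refine ⟨R, hR, A, hxA, hA, fun y hy z hz => (hlip y hy z hz).trans ?_⟩
    refine mul_le_mul_of_nonneg_right ?_ dist_nonneg
    calc C₀ * q ≤ C₀ * (2 * D) := by gcongr; exact_mod_cast hq.le
      _ = 2 * C₀ * D := by ring
      _ ≤ max 1 (2 * C₀) * D := by gcongr; exact le_max_right _ _
  · obtain ⟨q, hqd, hDq, hq⟩ := hdd.exists_between
      (show D < (δ / C₀).toNNReal from hD0 ▸ Real.toNNReal_pos.2 (by positivity))
    obtain ⟨R, hR, A, hxA, hA, hlip⟩ := hmain q hqd hDq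
    refine ⟨R, hR, A, hxA, hA, fun y hy z hz => (hlip y hy z hz).trans ?_⟩
    gcongr
    rw [Real.lt_toNNReal_iff_coe_lt, lt_div_iff₀' hC₀pos] at hq
    exact hq.le

end
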